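/- Fix c ∈ ℂ with c ≠ 0, N ≥ 1 and an index ℓ ∈ {1,…,N}. Let μ_1,…,μ_N and pairwise distinct λ_1,…,λ_N be complex numbers with μ_k ≠ λ_j and λ_m−λ_j±ic ≠ 0, and let λ_p, λ_s be admissible auxiliary parameters. Then det_N(δ_{jk}+U_{jk}) = (V⁺_s−V⁻_s)·det_N(E^ℓ), where the matrix E^ℓ is given by E^ℓ_{ℓk} = K(λ_p,λ_k)/(V⁺_ℓ−V⁻_ℓ) for the row j = ℓ, and E^ℓ_{jk} = δ_{jk} + [i/(V⁺_j−V⁻_j)]·Ξ_j·K(λ_j,λ_k) for j ≠ ℓ. -/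

import Mathlib

open Complex Finset Matrix

namespace LL

noncomputable def Kk (c x y : ℂ) : ℂ := 2 * c / ((x - y) ^ 2 + c ^ 2)

noncomputable def Vp {N M : ℕ} (c : ℂ) (μ : Fin N → ℂ) (lam : Fin M → ℂ) (x : ℂ) : ℂ :=
  (∏ m, (μ m - x + I * c)) / ∏ m, (lam m - x + I * c)

noncomputable def Vm {N M : ℕ} (c : ℂ) (μ : Fin N → ℂ) (lam : Fin M → ℂ) (x : ℂ) : ℂ :=
  (∏ m, (μ m - x - I * c)) / ∏ m, (lam m - x - I * c)

noncomputable def Xi {N M : ℕ} (μ : Fin N → ℂ) (lam : Fin M → ℂ) (j : Fin M) : ℂ :=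
  (∏ m, (μ m - lam j)) / ∏ m ∈ Finset.univ.erase j, (lam m - lam j)

noncomputable def Umat {N M : ℕ} (c : ℂ) (μ : Fin N → ℂ) (lam : Fin M → ℂ) (lp ls : ℂ) :
    Matrix (Fin M) (Fin M) ℂ := fun j k =>
  I / (Vp c μ lam (lam j) - Vm c μ lam (lam j)) * Xi μ lam j *
    (Kk c (lam j) (lam k) - Kk c lp (lam k) * Kk c ls (lam j))

noncomputable def U1mat {N M : ℕ} (c : ℂ) (μ : Fin N → ℂ) (lam : Fin M → ℂ) (lp : ℂ) :
    Matrix (Fin M) (Fin M) ℂ := fun j k =>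
  I / (Vp c μ lam (lam j) - Vm c μ lam (lam j)) * Xi μ lam j *
    (Kk c (lam j) (lam k) - Kk c lp (lam k))

noncomputable def U2mat {N M : ℕ} (c : ℂ) (μ : Fin N → ℂ) (lam : Fin M → ℂ) (lp : ℂ) :
    Matrix (Fin M) (Fin M) ℂ := fun j k =>
  U1mat c μ lam lp j k + I / (Vp c μ lam (lam j) - Vm c μ lam (lam j)) * Kk c lp (lam k)

noncomputable def HR {N M : ℕ} (c sc : ℂ) (R : ℕ) (μ : Fin N → ℂ) (lam : Fin M → ℂ)
    (lp ls : ℂ) : ℂ :=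
  (I * sc) ^ R / (c ^ (2 * R - 1) * ((R - 1).factorial : ℂ)) * (-1 : ℂ) ^ (N * (R - 1)) *
    (∏ j, ∏ k, (lam j - lam k + I * c)) *
    (∏ j, ∏ k, (lam j - μ k)⁻¹) *
    (∏ j, (Vp c μ lam (lam j) - Vm c μ lam (lam j))) *
    (1 + Umat c μ lam lp ls).det /
    ((Vp c μ lam lp - Vm c μ lam lp) * (Vp c μ lam ls - Vm c μ lam ls))

noncomputable def Jcal {N : ℕ} (μ lam : Fin N → ℂ) : ℂ :=
  (∑ j, lam j - ∑ j, μ j) ^ 4 -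
    4 * (∑ j, lam j - ∑ j, μ j) * (∑ j, lam j ^ 3 - ∑ j, μ j ^ 3) +
    3 * (∑ j, lam j ^ 2 - ∑ j, μ j ^ 2) ^ 2

noncomputable def Fff {N : ℕ} (c : ℂ) (μ lam : Fin N → ℂ) (lp ls : ℂ) : ℂ :=
  (-1 : ℂ) ^ N * (Jcal μ lam / (6 * c)) *
    (∏ j, ∏ k, (lam j - lam k + I * c)) *
    (∏ j, ∏ k, (lam j - μ k)⁻¹) *
    (∏ j, (Vp c μ lam (lam j) - Vm c μ lam (lam j))) *
    (1 + Umat c μ lam lp ls).det /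
    ((Vp c μ lam lp - Vm c μ lam lp) * (Vp c μ lam ls - Vm c μ lam ls))

noncomputable def Tcal {N M : ℕ} (μ : Fin N → ℂ) (lam : Fin M → ℂ) : ℂ :=
  (1 / 2 : ℂ) * ((∑ j, lam j - ∑ j, μ j) ^ 2 - (∑ j, lam j ^ 2 - ∑ j, μ j ^ 2))

noncomputable def Gff {N M : ℕ} (c sc : ℂ) (μ : Fin N → ℂ) (lam : Fin M → ℂ) (lp ls : ℂ) : ℂ :=
  -I * (Tcal μ lam / (c * sc)) *
    (∏ j, ∏ k, (lam j - lam k + I * c)) *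
    (∏ j, ∏ k, (lam j - μ k)⁻¹) *
    (∏ j, (Vp c μ lam (lam j) - Vm c μ lam (lam j))) *
    (1 + Umat c μ lam lp ls).det /
    ((Vp c μ lam lp - Vm c μ lam lp) * (Vp c μ lam ls - Vm c μ lam ls))

noncomputable def fsc (c x y : ℂ) : ℂ := (x - y + I * c) / (x - y)

noncomputable def stringRap (cb : ℝ) (M : ℕ) (δ : Fin M → ℂ) (j : Fin M) : ℂ :=
  I * ((cb : ℂ) / 2) * ((M : ℂ) - 1 - 2 * (j.val : ℂ)) + I * δ j

end LL

open LL

/-!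
The vector of the `V⁺_j - V⁻_j` lies in the left kernel of the matrix
`A = δ_{jk} + i Ξ_j K(λ_j, λ_k) / (V⁺_j - V⁻_j)`: the partial fraction expansion of
`∏ (μ_m - z) / ∏ (λ_m - z)` gives the sum rule `∑ j, i Ξ_j K(x, λ_j) = V⁻(x) - V⁺(x)`, whose
case `x = λ_k` is column `k` of the kernel relation. Now `1 + U` is a
rank-one perturbation of `A`, so combining its rows with the entries of the null vector turns row
`ℓ` into `(V⁺_s - V⁻_s) K(λ_p, ·)`, by the sum rule at `x = λ_s`; subtracting multiples of this row
removes the perturbation from the other rows.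
-/

section LeftKernel

variable {n R : Type*} [Fintype n] [DecidableEq n] [CommRing R]

lemma det_updateRow_add_vecMulVec (A : Matrix n n R) (u v : n → R) (l : n) :
    ((A + vecMulVec u v).updateRow l v).det = (A.updateRow l v).det := by
  refine det_eq_of_forall_row_eq_smul_add_const (Function.update u l 0) l
    (Function.update_self ..) fun j k => ?_
  rcases eq_or_ne j l with rfl | hj
  · simp
  · simp [hj, vecMulVec_apply]

lemma mul_det_add_vecMulVec_of_vecMul_eq_zero {A : Matrix n n R} {d : n → R} (hd : d ᵥ* A = 0)
    (u v : n → R) (l : n) :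
    d l * (A + vecMulVec u v).det = (d ⬝ᵥ u) * (A.updateRow l v).det := by
  have row_combination : ∑ j, d j • (A + vecMulVec u v) j = (d ⬝ᵥ u) • v := by
    rw [← vecMul_eq_sum, vecMul_add, hd, zero_add, vecMul_vecMulVec]
  rw [← smul_eq_mul, ← det_updateRow_sum, row_combination, det_updateRow_smul,
    det_updateRow_add_vecMulVec]

end LeftKernel

section PartialFractions

variable {F ι : Type*} [Field F] [DecidableEq ι] {s : Finset ι} {v : ι → F} {x : F}

lemma eval_div_eval_nodal_of_monic {P : Polynomial F} (hP : P.Monic) (hdeg : P.degree = #s)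
    (hv : Set.InjOn v s) (hx : ∀ i ∈ s, x ≠ v i) :
    P.eval x / (Lagrange.nodal s v).eval x =
      1 + ∑ i ∈ s, Lagrange.nodalWeight s v i * (x - v i)⁻¹ * P.eval (v i) := by
  have remainder_degree : (P - Lagrange.nodal s v).degree < #s :=
    hdeg ▸ Polynomial.degree_sub_lt_left (hdeg.trans Lagrange.degree_nodal.symm) hP.ne_zero
      (hP.leadingCoeff.trans Lagrange.nodal_monic.leadingCoeff.symm)
  have remainder_eq_interpolate :
      P - Lagrange.nodal s v = Lagrange.interpolate s v fun i => P.eval (v i) :=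
    Lagrange.eq_interpolate_of_eval_eq _ hv remainder_degree fun i hi => by
      rw [Polynomial.eval_sub, Lagrange.eval_nodal_at_node hi, sub_zero]
  have eval_remainder := congrArg (Polynomial.eval x) remainder_eq_interpolate
  rw [Polynomial.eval_sub, Lagrange.eval_interpolate_not_at_node _ hx,
    sub_eq_iff_eq_add'] at eval_remainder
  rw [div_eq_iff (Lagrange.eval_nodal_not_at_node hx), eval_remainder]
  ring

lemma prod_sub_div_prod_sub (hv : Set.InjOn v s) (hx : ∀ i ∈ s, v i ≠ x) (w : ι → F) :
    (∏ i ∈ s, (w i - x)) / ∏ i ∈ s, (v i - x) =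
      1 + ∑ j ∈ s, (∏ i ∈ s, (w i - v j)) / (∏ i ∈ s.erase j, (v i - v j)) / (v j - x) := by
  -- Reflecting the nodes and `x` through the origin turns `x - v i` into `v i - x`.
  have h := eval_div_eval_nodal_of_monic (x := -x) (v := -v)
    (Lagrange.nodal_monic (s := s) (v := -w)) Lagrange.degree_nodal
    (neg_injective.comp_injOn hv) fun i hi => neg_injective.ne (hx i hi).symm
  simp only [Lagrange.eval_nodal, Lagrange.nodalWeight, Pi.neg_apply, sub_neg_eq_add,
    neg_add_eq_sub, prod_inv_distrib] at h
  rw [h]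
  refine congrArg (1 + ·) (sum_congr rfl fun j _ => ?_)
  simp only [div_eq_mul_inv]
  ring

end PartialFractions

namespace LL

lemma Kk_comm (c x y : ℂ) : Kk c x y = Kk c y x := by
  rw [Kk, Kk, sub_sq_comm]

lemma sq_add_sq_eq_mul (x c : ℂ) : x ^ 2 + c ^ 2 = (x + I * c) * (x - I * c) := by
  linear_combination c ^ 2 * I_sq

variable {N : ℕ} (c : ℂ) (μ : Fin N → ℂ) {lam : Fin N → ℂ}

lemma sum_Xi_mul_Kk (hinj : Function.Injective lam) {x : ℂ}
    (hx : ∀ j, (x - lam j) ^ 2 + c ^ 2 ≠ 0) :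
    ∑ j, I * Xi μ lam j * Kk c x (lam j) = Vm c μ lam x - Vp c μ lam x := by
  have factored (j) : (x - lam j) ^ 2 + c ^ 2 = (lam j - (x + I * c)) * (lam j - (x - I * c)) := by
    rw [sq_add_sq_eq_mul]
    ring
  have hplus (j) : lam j - (x - I * c) ≠ 0 := right_ne_zero_of_mul (factored j ▸ hx j)
  have hminus (j) : lam j - (x + I * c) ≠ 0 := left_ne_zero_of_mul (factored j ▸ hx j)
  have Vp_expansion : Vp c μ lam x = 1 + ∑ j, Xi μ lam j / (lam j - (x - I * c)) := by
    simp only [Vp, sub_add]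
    exact prod_sub_div_prod_sub hinj.injOn (fun j _ => sub_ne_zero.1 (hplus j)) μ
  have Vm_expansion : Vm c μ lam x = 1 + ∑ j, Xi μ lam j / (lam j - (x + I * c)) := by
    simp only [Vm, sub_sub]
    exact prod_sub_div_prod_sub hinj.injOn (fun j _ => sub_ne_zero.1 (hminus j)) μ
  rw [Vp_expansion, Vm_expansion, add_sub_add_left_eq_sub, ← sum_sub_distrib]
  refine sum_congr rfl fun j _ => ?_
  rw [Kk, factored, div_sub_div _ _ (hminus j) (hplus j), mul_div_assoc']
  congr 1
  ring

/-- The vector of the `V⁺_j - V⁻_j`, a left null vector of `kernelMat`. -/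
noncomputable def gapVec (c : ℂ) (μ lam : Fin N → ℂ) : Fin N → ℂ := fun j =>
  Vp c μ lam (lam j) - Vm c μ lam (lam j)

/-- The column vector with entries `i Ξ_j K(λ_j, x) / (V⁺_j - V⁻_j)`, where `x` is a `λ_k` in the
columns of `kernelMat` and `λ_s` in the rank-one part of `Umat`. -/
noncomputable def kernelCol (c : ℂ) (μ lam : Fin N → ℂ) (x : ℂ) : Fin N → ℂ := fun j =>
  I / (Vp c μ lam (lam j) - Vm c μ lam (lam j)) * Xi μ lam j * Kk c (lam j) x

/-- The matrix `δ_{jk} + i Ξ_j K(λ_j, λ_k) / (V⁺_j - V⁻_j)`, that is `1 + Umat` without its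
rank-one part. The matrix `E^ℓ` is obtained from it by replacing row `ℓ`. -/
noncomputable def kernelMat (c : ℂ) (μ lam : Fin N → ℂ) : Matrix (Fin N) (Fin N) ℂ :=
  1 + of fun j k => kernelCol c μ lam (lam k) j

lemma gapVec_dotProduct_kernelCol (hinj : Function.Injective lam)
    (hV : ∀ j, Vp c μ lam (lam j) ≠ Vm c μ lam (lam j)) {x : ℂ}
    (hx : ∀ j, (x - lam j) ^ 2 + c ^ 2 ≠ 0) :
    gapVec c μ lam ⬝ᵥ kernelCol c μ lam x = Vm c μ lam x - Vp c μ lam x := by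
  rw [← sum_Xi_mul_Kk c μ hinj hx]
  refine sum_congr rfl fun j _ => ?_
  rw [gapVec, kernelCol, Kk_comm c x, ← mul_assoc, ← mul_assoc,
    mul_div_cancel₀ _ (sub_ne_zero.2 (hV j))]

lemma gapVec_vecMul_kernelMat (hinj : Function.Injective lam)
    (hV : ∀ j, Vp c μ lam (lam j) ≠ Vm c μ lam (lam j))
    (hlam : ∀ j k, (lam j - lam k) ^ 2 + c ^ 2 ≠ 0) :
    gapVec c μ lam ᵥ* kernelMat c μ lam = 0 := by
  rw [kernelMat, vecMul_add, vecMul_one]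
  ext k
  calc gapVec c μ lam k + gapVec c μ lam ⬝ᵥ kernelCol c μ lam (lam k)
      = gapVec c μ lam k + (Vm c μ lam (lam k) - Vp c μ lam (lam k)) := by
        rw [gapVec_dotProduct_kernelCol c μ hinj hV (hlam k)]
    _ = 0 := by rw [gapVec, sub_add_sub_cancel, sub_self]

lemma kernelMat_add_vecMulVec_neg_kernelCol (κ : Fin N → ℂ) (x : ℂ) :
    kernelMat c μ lam + vecMulVec (-kernelCol c μ lam x) κ =
      1 + of fun j k : Fin N =>
        I / (Vp c μ lam (lam j) - Vm c μ lam (lam j)) * Xi μ lam j *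
          (Kk c (lam j) (lam k) - κ k * Kk c x (lam j)) := by
  ext j k
  simp only [kernelMat, kernelCol, Matrix.add_apply, of_apply, vecMulVec_apply, Pi.neg_apply,
    Kk_comm c x]
  ring

lemma kernelMat_updateRow (κ : Fin N → ℂ) (l : Fin N) :
    (kernelMat c μ lam).updateRow l ((gapVec c μ lam l)⁻¹ • κ) =
      of fun j k : Fin N =>
        if j = l then
          κ k / (Vp c μ lam (lam l) - Vm c μ lam (lam l))
        else
          (if j = k then (1 : ℂ) else 0) +
            I / (Vp c μ lam (lam j) - Vm c μ lam (lam j)) * Xi μ lam j *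
              Kk c (lam j) (lam k) := by
  ext j k
  simp only [updateRow_apply, kernelMat, kernelCol, gapVec, Matrix.add_apply, one_apply, of_apply,
    Pi.smul_apply, smul_eq_mul, div_eq_inv_mul]

end LL

-- `κ` stands for the row `K(λ_p, ·)`.
theorem det_U_eq_Vs_det_E_general {N : ℕ} (c : ℂ) (l : Fin N)
    (μ lam : Fin N → ℂ) (hinj : Function.Injective lam)
    (hlam : ∀ j k, (lam j - lam k) ^ 2 + c ^ 2 ≠ 0)
    (κ : Fin N → ℂ) (ls : ℂ)
    (hs : ∀ j, (ls - lam j) ^ 2 + c ^ 2 ≠ 0)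
    (hV : ∀ j, Vp c μ lam (lam j) ≠ Vm c μ lam (lam j)) :
    (1 + Matrix.of fun j k : Fin N =>
        I / (Vp c μ lam (lam j) - Vm c μ lam (lam j)) * Xi μ lam j *
          (Kk c (lam j) (lam k) - κ k * Kk c ls (lam j))).det =
      (Vp c μ lam ls - Vm c μ lam ls) *
        (Matrix.of fun j k : Fin N =>
          if j = l then
            κ k / (Vp c μ lam (lam l) - Vm c μ lam (lam l))
          else
            (if j = k then (1 : ℂ) else 0) +
              I / (Vp c μ lam (lam j) - Vm c μ lam (lam j)) * Xi μ lam j *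
                Kk c (lam j) (lam k)).det := by
  have gap_ne_zero : gapVec c μ lam l ≠ 0 := sub_ne_zero.2 (hV l)
  have row_replacement := mul_det_add_vecMulVec_of_vecMul_eq_zero
    (gapVec_vecMul_kernelMat c μ hinj hV hlam) (-kernelCol c μ lam ls) κ l
  rw [dotProduct_neg, gapVec_dotProduct_kernelCol c μ hinj hV hs, neg_sub] at row_replacement
  rw [← kernelMat_add_vecMulVec_neg_kernelCol, ← kernelMat_updateRow, det_updateRow_smul,
    mul_left_comm, ← row_replacement, inv_mul_cancel_left₀ gap_ne_zero]

/-- Row-replacement determinant identity: `det_N(δ+U) = (V⁺_s−V⁻_s)·det_N(E^ℓ)`, where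
row `ℓ` of `E^ℓ` is `K(λ_p,λ_k)/(V⁺_ℓ−V⁻_ℓ)` and the other rows are those of
`δ_{jk} + (i/(V⁺_j−V⁻_j))·Ξ_j·K(λ_j,λ_k)`. -/
theorem det_U_eq_Vs_det_E {N : ℕ} (hN : 1 ≤ N) (c : ℂ) (hc : c ≠ 0) (l : Fin N)
    (μ lam : Fin N → ℂ) (hinj : Function.Injective lam)
    (hmulam : ∀ k j, μ k ≠ lam j)
    (hpm : ∀ j k, lam j - lam k + I * c ≠ 0 ∧ lam j - lam k - I * c ≠ 0)
    (lp ls : ℂ)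
    (hp1 : ∀ j, (lp - lam j) ^ 2 + c ^ 2 ≠ 0)
    (hs1 : ∀ j, (ls - lam j) ^ 2 + c ^ 2 ≠ 0)
    (hV : ∀ j, Vp c μ lam (lam j) ≠ Vm c μ lam (lam j))
    (hVs : Vp c μ lam ls ≠ Vm c μ lam ls) :
    (1 + Umat c μ lam lp ls).det =
      (Vp c μ lam ls - Vm c μ lam ls) *
        (Matrix.of fun j k : Fin N =>
          if j = l then
            Kk c lp (lam k) / (Vp c μ lam (lam l) - Vm c μ lam (lam l))
          else
            (if j = k then (1 : ℂ) else 0) +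
              I / (Vp c μ lam (lam j) - Vm c μ lam (lam j)) * Xi μ lam j *
                Kk c (lam j) (lam k)).det :=
  det_U_eq_Vs_det_E_general c l μ lam hinj
    (fun j k => sq_add_sq_eq_mul (lam j - lam k) c ▸ mul_ne_zero (hpm j k).1 (hpm j k).2)
    (fun k => Kk c lp (lam k)) ls hs1 hV
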